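/- Let q be the Lorentzian quadratic form q(x) = 2x₁x₃ + x₂² on ℝ³ and let ρ be a continuous representation of O(1,2) on a finite-dimensional real normed vector space V. For s ∈ ℝ let a^s ∈ O(1,2) be defined by a^s e₁ = e^s e₁, a^s e₂ = e₂, a^s e₃ = e^{−s} e₃, and for t ∈ ℝ let n(t) ∈ O(1,2) be defined by n(t)(x₁,x₂,x₃) = (x₁ + t x₂ − (t²/2) x₃, x₂ − t x₃, x₃). Let V⁻ = {v ∈ V : the set {ρ(a^s)v : s ≥ 0} is bounded}. Let t₁, t₂, t₃ be three pairwise distinct real numbers. Then every vector v ∈ ρ(n(t₁))(V⁻) ∩ ρ(n(t₂))(V⁻) ∩ ρ(n(t₃))(V⁻) is fixed by the identity component of O(1,2): ρ(g)v = v for every g in the connected component of the identity in O(1,2). -/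

import Mathlib

open Matrix Filter Topology Bornology

noncomputable section

/-- The Lorentzian quadratic form `q(x) = 2 x₁ x_{n+1} + x₂² + ⋯ + xₙ²` on `ℝ^{n+1}`
(coordinates indexed by `Fin (n+1)`, so `x₁` is `x 0` and `x_{n+1}` is `x (Fin.last n)`). -/
def lorQ (n : ℕ) (x : Fin (n + 1) → ℝ) : ℝ :=
  2 * x 0 * x (Fin.last n) +
    ∑ i : Fin (n + 1), if i ≠ 0 ∧ i ≠ Fin.last n then x i ^ 2 else 0

/-- The polar bilinear form `B` of `lorQ`. -/
def lorB (n : ℕ) (x y : Fin (n + 1) → ℝ) : ℝ :=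
  x 0 * y (Fin.last n) + x (Fin.last n) * y 0 +
    ∑ i : Fin (n + 1), if i ≠ 0 ∧ i ≠ Fin.last n then x i * y i else 0

/-- The Lorentz group `O(1,n)`: linear automorphisms of `ℝ^{n+1}` preserving `lorQ`. -/
def LorentzGrp (n : ℕ) : Subgroup (GL (Fin (n + 1)) ℝ) where
  carrier := {g | ∀ x, lorQ n ((g : Matrix (Fin (n + 1)) (Fin (n + 1)) ℝ).mulVec x) = lorQ n x}
  one_mem' := by intro x; simp
  mul_mem' := by
    intro a b ha hb x
    have h : ((a * b : GL (Fin (n + 1)) ℝ) : Matrix (Fin (n + 1)) (Fin (n + 1)) ℝ).mulVec x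
        = (a : Matrix (Fin (n + 1)) (Fin (n + 1)) ℝ).mulVec
            ((b : Matrix (Fin (n + 1)) (Fin (n + 1)) ℝ).mulVec x) := by
      rw [Matrix.mulVec_mulVec]; rfl
    rw [h, ha, hb]
  inv_mem' := by
    intro g hg x
    have h : (g : Matrix (Fin (n + 1)) (Fin (n + 1)) ℝ).mulVec
        ((↑g⁻¹ : Matrix (Fin (n + 1)) (Fin (n + 1)) ℝ).mulVec x) = x := by
      rw [Matrix.mulVec_mulVec]
      have : (g : Matrix (Fin (n + 1)) (Fin (n + 1)) ℝ) * (↑g⁻¹ : Matrix (Fin (n + 1)) (Fin (n + 1)) ℝ)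
          = (1 : Matrix (Fin (n + 1)) (Fin (n + 1)) ℝ) := by
        rw [← Units.val_mul, mul_inv_cancel, Units.val_one]
      rw [this, Matrix.one_mulVec]
    calc lorQ n ((↑g⁻¹ : Matrix (Fin (n + 1)) (Fin (n + 1)) ℝ).mulVec x)
        = lorQ n ((g : Matrix (Fin (n + 1)) (Fin (n + 1)) ℝ).mulVec
            ((↑g⁻¹ : Matrix (Fin (n + 1)) (Fin (n + 1)) ℝ).mulVec x)) := (hg _).symm
      _ = lorQ n x := by rw [h]

/-- The action of an element of `O(1,n)` on a vector of `ℝ^{n+1}`. -/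
def lorAct {n : ℕ} (g : LorentzGrp n) (x : Fin (n + 1) → ℝ) : Fin (n + 1) → ℝ :=
  ((g : GL (Fin (n + 1)) ℝ) : Matrix (Fin (n + 1)) (Fin (n + 1)) ℝ).mulVec x

/-- The base point `o = e₁ − e_{n+1}`, a timelike vector. -/
def basePt (n : ℕ) : Fin (n + 1) → ℝ := fun i =>
  if i = 0 then 1 else if i = Fin.last n then -1 else 0

/-- `u` is a limit direction of a subset `G` of `O(1,n)`: `u` is nonzero lightlike, and some
sequence `λ_k • g_k⁻¹(o)`, with `g_k ∈ G`, converges to `u`. -/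
def IsLimitDirection (n : ℕ) (G : Set (LorentzGrp n)) (u : Fin (n + 1) → ℝ) : Prop :=
  u ≠ 0 ∧ lorQ n u = 0 ∧
    ∃ (g : ℕ → LorentzGrp n) (lam : ℕ → ℝ), (∀ k, g k ∈ G) ∧
      Tendsto (fun k => lam k • lorAct (g k)⁻¹ (basePt n)) atTop (𝓝 u)

/-- A vector `v` is stable under `G ⊆ O(1,n)` if its `ρ`-orbit under `G` is bounded. -/
def IsStableVec {n : ℕ} {V : Type*} [NormedAddCommGroup V] [NormedSpace ℝ V]
    (ρ : LorentzGrp n →* (V →L[ℝ] V)) (G : Set (LorentzGrp n)) (v : V) : Prop :=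
  IsBounded {w : V | ∃ g ∈ G, w = ρ g v}

/-- `SO°(E)`: the identity component of the subgroup of `O(1,n)` of elements leaving `E`
invariant and fixing pointwise every vector orthogonal to `E`. -/
def SOIdComp (n : ℕ) (E : Submodule ℝ (Fin (n + 1) → ℝ)) : Set (LorentzGrp n) :=
  connectedComponentIn
    {g : LorentzGrp n |
      E.map ((g : GL (Fin (n + 1)) ℝ) : Matrix (Fin (n + 1)) (Fin (n + 1)) ℝ).mulVecLin = E ∧
      ∀ x : Fin (n + 1) → ℝ, (∀ e ∈ E, lorB n x e = 0) → lorAct g x = x} 1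

open Polynomial in
lemma poly_P1 (f : ℝ[X]) (hf : f ≠ 0) (τ r C : ℝ) (hr : 0 < r)
    (h : ∀ k : ℕ, |f.eval (τ + Real.exp (-(k:ℝ)))| * r ^ k ≤ C) :
    r ≤ Real.exp 1 ^ (f.rootMultiplicity τ) := by
  obtain ⟨g, hg, hnd⟩ := Polynomial.exists_eq_pow_rootMultiplicity_mul_and_not_dvd f hf τ
  set m := f.rootMultiplicity τ
  by_contra! hlt
  have hgτ : g.eval τ ≠ 0 := fun h0 => hnd (Polynomial.dvd_iff_isRoot.2 h0)
  have hq : 1 < r / Real.exp 1 ^ m := by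
    rw [one_lt_div (by positivity)]; exact hlt
  have h1 : Tendsto (fun k : ℕ => (r / Real.exp 1 ^ m) ^ k) atTop atTop :=
    tendsto_pow_atTop_atTop_of_one_lt hq
  have h2 : Tendsto (fun k : ℕ => |g.eval (τ + Real.exp (-(k:ℝ)))|) atTop (𝓝 |g.eval τ|) := by
    have : Tendsto (fun k : ℕ => τ + Real.exp (-(k:ℝ))) atTop (𝓝 (τ + 0)) :=
      tendsto_const_nhds.add (Real.tendsto_exp_neg_atTop_nhds_zero.comp tendsto_natCast_atTop_atTop)
    rw [add_zero] at this
    exact ((g.continuous.abs).tendsto τ).comp this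
  have h3 := h2.pos_mul_atTop (abs_pos.2 hgτ) h1
  obtain ⟨k, hk⟩ := (h3.eventually_gt_atTop C).exists
  have := h k
  rw [hg] at this
  simp only [eval_mul, eval_pow, eval_sub, eval_X, eval_C, add_sub_cancel_left, abs_mul, abs_pow, Real.abs_exp] at this
  have e : Real.exp (-(k:ℝ)) = (Real.exp 1 ^ k)⁻¹ := by
    rw [Real.exp_neg, ← Real.exp_nat_mul, mul_one]
  have : |g.eval (τ + Real.exp (-(k:ℝ)))| * (r / Real.exp 1 ^ m) ^ k ≤ C := by
    refine le_trans (le_of_eq ?_) this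
    rw [div_pow]
    conv_rhs => rw [e]
    rw [← pow_mul, inv_pow, ← pow_mul, mul_comm m k]
    rw [e]
    field_simp
  linarith

open Polynomial in
lemma poly_P2 (f : ℝ[X]) (hf : f ≠ 0) (r C : ℝ) (hr : 0 < r)
    (h : ∀ k : ℕ, |f.eval (Real.exp (k:ℝ))| ≤ C * r ^ k) :
    Real.exp 1 ^ f.natDegree ≤ r := by
  by_contra! hlt
  have h0 : Tendsto (fun k : ℕ => C * (r / Real.exp 1 ^ f.natDegree) ^ k) atTop (𝓝 (C * 0)) :=
    tendsto_const_nhds.mul (tendsto_pow_atTop_nhds_zero_of_lt_one (by positivity)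
      ((div_lt_one (by positivity)).2 hlt))
  have h1 : Tendsto (fun x : ℝ => f.eval x / x ^ f.natDegree) atTop (𝓝 f.leadingCoeff) := by
    have := Polynomial.isEquivalent_atTop_lead f
    have h2 : Tendsto (fun x : ℝ => f.leadingCoeff * x ^ f.natDegree / x ^ f.natDegree) atTop (𝓝 f.leadingCoeff) := by
      refine tendsto_const_nhds.congr' ?_
      filter_upwards [eventually_gt_atTop 0] with x hx
      field_simp
    exact (this.div Asymptotics.IsEquivalent.refl).symm.tendsto_nhds h2
  have h2 := (h1.comp (Real.tendsto_exp_atTop.comp tendsto_natCast_atTop_atTop)).abs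
  have h3 : |f.leadingCoeff| ≤ C * 0 := by
    refine le_of_tendsto_of_tendsto' h2 h0 fun k => ?_
    simp only [Function.comp]
    have e : Real.exp (k:ℝ) = Real.exp 1 ^ k := by rw [← Real.exp_nat_mul, mul_one]
    rw [abs_div, abs_pow, Real.abs_exp, div_le_iff₀ (by positivity)]
    refine (h k).trans (le_of_eq ?_)
    rw [e, div_pow, ← pow_mul, ← pow_mul, mul_comm k]
    field_simp
  have : f.leadingCoeff ≠ 0 := leadingCoeff_ne_zero.2 hf
  have := abs_pos.2 this
  linarith

open Polynomial in
lemma poly_P3 (f : ℝ[X]) (hf : f ≠ 0) (a b c : ℝ) (hab : a ≠ b) (hac : a ≠ c) (hbc : b ≠ c) :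
    f.rootMultiplicity a + f.rootMultiplicity b + f.rootMultiplicity c ≤ f.natDegree := by
  classical
  have h : ∑ x ∈ ({a, b, c} : Finset ℝ), f.roots.count x ≤ f.roots.card := by
    rw [← Multiset.sum_count_eq_card (s := f.roots.toFinset ∪ {a,b,c}) (by intro x hx; simp [Multiset.mem_toFinset] at *; tauto)]
    exact Finset.sum_le_sum_of_subset Finset.subset_union_right
  rw [Finset.sum_insert (by simp [hab, hac]), Finset.sum_insert (by simp [hbc]), Finset.sum_singleton] at h
  simp only [count_roots] at h
  have := f.card_roots'
  omega

open Polynomial in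
lemma poly_deg_le (f : ℝ[X]) (hf : f ≠ 0) (r : ℝ) (hr : 0 ≤ r)
    (h : ∀ δ > 0, ∃ C, ∀ k : ℕ, |f.eval (Real.exp (k:ℝ))| ≤ C * ((r + δ) ^ 2) ^ k) :
    Real.exp 1 ^ f.natDegree ≤ r ^ 2 := by
  have h1 : ∀ δ > 0, Real.exp 1 ^ f.natDegree ≤ (r + δ) ^ 2 := fun δ hδ => by
    obtain ⟨C, hC⟩ := h δ hδ
    exact poly_P2 f hf _ C (by positivity) hC
  have h2 : Tendsto (fun δ : ℝ => (r + δ) ^ 2) (𝓝[>] 0) (𝓝 ((r + 0) ^ 2)) := by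
    refine Tendsto.mono_left ?_ nhdsWithin_le_nhds
    exact Continuous.tendsto (by fun_prop) _
  rw [add_zero] at h2
  exact ge_of_tendsto h2 (eventually_nhdsWithin_of_forall h1)

open Polynomial in
lemma poly_three (f : ℝ[X]) (r : ℝ) (hr : 1 < r)
    (a b c : ℝ) (hab : a ≠ b) (hac : a ≠ c) (hbc : b ≠ c)
    (ha : ∃ C, ∀ k : ℕ, |f.eval (a + Real.exp (-(k:ℝ)))| * r ^ k ≤ C)
    (hb : ∃ C, ∀ k : ℕ, |f.eval (b + Real.exp (-(k:ℝ)))| * r ^ k ≤ C)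
    (hc : ∃ C, ∀ k : ℕ, |f.eval (c + Real.exp (-(k:ℝ)))| * r ^ k ≤ C)
    (h : ∀ δ > 0, ∃ C, ∀ k : ℕ, |f.eval (Real.exp (k:ℝ))| ≤ C * ((r + δ) ^ 2) ^ k) :
    f = 0 := by
  by_contra hf
  have h0 := poly_deg_le f hf r (by linarith) h
  obtain ⟨_, ha⟩ := ha
  obtain ⟨_, hb⟩ := hb
  obtain ⟨_, hc⟩ := hc
  have ha := poly_P1 f hf _ _ _ (by linarith) ha
  have hb := poly_P1 f hf _ _ _ (by linarith) hb
  have hc := poly_P1 f hf _ _ _ (by linarith) hc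
  have h3 := poly_P3 f hf a b c hab hac hbc
  have h4 : Real.exp 1 ^ (f.rootMultiplicity a + f.rootMultiplicity b + f.rootMultiplicity c) ≤ Real.exp 1 ^ f.natDegree :=
    pow_le_pow_right₀ (Real.one_le_exp (by norm_num)) h3
  rw [pow_add, pow_add] at h4
  have h5 : r * r * r ≤ Real.exp 1 ^ f.rootMultiplicity a * Real.exp 1 ^ f.rootMultiplicity b * Real.exp 1 ^ f.rootMultiplicity c := by
    gcongr
  have : r * r * 1 < r * r * r := by gcongr
  nlinarith

lemma nilp {E : Type*} [NormedAddCommGroup E] [NormedSpace ℝ E] [FiniteDimensional ℝ E]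
    (U : ℝ → (E →L[ℝ] E)) (h0 : U 0 = 1) (hc : Continuous U)
    (B B' : E →L[ℝ] E) (hB : B * B' = 1) (c : ℝ) (hc1 : 1 < c)
    (hconj : ∀ t, B * U t = U (c * t) * B) (t : ℝ) :
    ∃ d : ℕ, (U t - 1) ^ d = 0 := by
  have key : ∀ x s : ℝ, (x • (1 : E →L[ℝ] E) - U (c * s)).det = (x • (1 : E →L[ℝ] E) - U s).det := by
    intro x s
    have : x • (1 : E →L[ℝ] E) - U (c * s) = B * (x • (1 : E →L[ℝ] E) - U s) * B' := by
      rw [mul_sub, hconj, sub_mul, mul_assoc (U _), hB, mul_one]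
      simp [hB]
    rw [this]
    have h1 : B.det * B'.det = 1 := by
      have := congrArg ContinuousLinearMap.det hB
      simpa [ContinuousLinearMap.det, ContinuousLinearMap.toLinearMap_mul, ContinuousLinearMap.toLinearMap_one] using this
    simp only [ContinuousLinearMap.det, ContinuousLinearMap.toLinearMap_mul, map_mul] at h1 ⊢
    linear_combination (LinearMap.det (↑(x • (1 : E →L[ℝ] E) - U s) : E →ₗ[ℝ] E)) * h1
  have key2 : ∀ x : ℝ, ∀ k : ℕ, (x • (1 : E →L[ℝ] E) - U ((c⁻¹) ^ k * t)).det = (x • (1 : E →L[ℝ] E) - U t).det := by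
    intro x k
    induction k with
    | zero => simp
    | succ k ih =>
      rw [← ih, ← key x]
      have hc0 : c ≠ 0 := by positivity
      rw [pow_succ']
      congr 3
      field_simp
  have key3 : ∀ x : ℝ, (x • (1 : E →L[ℝ] E) - U t).det = (x - 1) ^ Module.finrank ℝ E := by
    intro x
    have h1 : Tendsto (fun k : ℕ => (c⁻¹) ^ k * t) atTop (𝓝 (0 * t)) :=
      (tendsto_pow_atTop_nhds_zero_of_lt_one (by positivity) (inv_lt_one_of_one_lt₀ hc1)).mul_const t
    rw [zero_mul] at h1
    have h2 : Continuous fun s => (x • (1 : E →L[ℝ] E) - U s).det :=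
      ContinuousLinearMap.continuous_det.comp (by fun_prop)
    have h3 := (h2.tendsto 0).comp h1
    have h4 := tendsto_nhds_unique (h3.congr (key2 x)) tendsto_const_nhds
    rw [← h4, h0]
    have : x • (1 : E →L[ℝ] E) - 1 = (x - 1) • 1 := by rw [sub_smul, one_smul]
    rw [this]
    simp [ContinuousLinearMap.det]
  have key4 : (U t : E →ₗ[ℝ] E).charpoly = (Polynomial.X - Polynomial.C 1) ^ Module.finrank ℝ E := by
    apply Polynomial.funext
    intro x
    rw [LinearMap.eval_charpoly]
    simp only [Polynomial.eval_pow, Polynomial.eval_sub, Polynomial.eval_X, Polynomial.eval_C]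
    rw [← key3]
    congr 1
  refine ⟨Module.finrank ℝ E, ?_⟩
  have := LinearMap.aeval_self_charpoly (U t : E →ₗ[ℝ] E)
  rw [key4] at this
  simp only [map_pow, map_sub, Polynomial.aeval_X, Polynomial.aeval_C, map_one] at this
  apply ContinuousLinearMap.coe_injective
  rw [ContinuousLinearMap.toLinearMap_pow]
  exact this

open Polynomial in
lemma poly_nat {E : Type*} [NormedAddCommGroup E] [NormedSpace ℝ E]
    (T : E →L[ℝ] E) (d : ℕ) (hd : (T - 1) ^ d = 0) (ℓ : E →L[ℝ] ℝ) (x : E) :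
    ∃ P : ℝ[X], ∀ k : ℕ, ℓ ((T ^ k) x) = P.eval (k : ℝ) := by
  refine ⟨∑ j ∈ Finset.range d, C (ℓ (((T - 1) ^ j) x) / (j.factorial : ℝ)) * descPochhammer ℝ j, fun k => ?_⟩
  have h1 : T ^ k = ∑ j ∈ Finset.range d, (k.choose j : ℝ) • (T - 1) ^ j := by
    have hT : T = (T - 1) + 1 := by abel
    conv_lhs => rw [hT, (Commute.one_right (T - 1)).add_pow]
    have e1 : ∀ D : ℕ → (E →L[ℝ] E), ∀ m, k < m → d ≤ m → ∑ j ∈ Finset.range m, (k.choose j : ℝ) • D j = ∑ j ∈ Finset.range (k+1), (k.choose j : ℝ) • (D j : E →L[ℝ] E) := by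
      intro D m hm _
      symm
      apply Finset.sum_subset
      · intro j; simp; omega
      · intro j _ hj
        simp at hj
        rw [Nat.choose_eq_zero_of_lt (by omega)]; simp
    have e2 : ∀ m, d ≤ m → ∑ j ∈ Finset.range m, (k.choose j : ℝ) • (T-1)^ j = ∑ j ∈ Finset.range d, (k.choose j : ℝ) • (T - 1) ^ j := by
      intro m hm
      symm
      apply Finset.sum_subset
      · intro j; simp; omega
      · intro j _ hj
        simp at hj
        rw [pow_eq_zero_of_le hj hd, smul_zero]
    rw [← e2 (max d (k+1)) (le_max_left _ _), e1 _ _ (by omega) (le_max_left _ _)]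
    apply Finset.sum_congr rfl
    intro j _
    rw [one_pow, mul_one, ← nsmul_eq_mul', Nat.cast_smul_eq_nsmul]
  rw [h1, eval_finsetSum]
  simp only [_root_.sum_apply, map_sum, _root_.smul_apply, map_smul, eval_mul, eval_C, smul_eq_mul]
  apply Finset.sum_congr rfl
  intro j _
  rw [descPochhammer_eval_eq_descFactorial, Nat.descFactorial_eq_factorial_mul_choose]
  push_cast
  field_simp

open Polynomial in
lemma poly_orbit {E : Type*} [NormedAddCommGroup E] [NormedSpace ℝ E] [FiniteDimensional ℝ E]
    (U : ℝ → (E →L[ℝ] E)) (h0 : U 0 = 1) (hadd : ∀ s t, U (s + t) = U s * U t) (hc : Continuous U)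
    (hn : ∀ t, ∃ d : ℕ, (U t - 1) ^ d = 0) (ℓ : E →L[ℝ] ℝ) (x : E) :
    ∃ P : ℝ[X], ∀ t, ℓ (U t x) = P.eval t := by
  have hpow : ∀ t, ∀ k : ℕ, U (k * t) = U t ^ k := by
    intro t k
    induction k with
    | zero => simp [h0]
    | succ k ih => rw [pow_succ, ← ih, ← hadd]; congr 1; push_cast; ring
  have hpos : ∀ x, ∃ P : ℝ[X], ∀ t, 0 ≤ t → ℓ (U t x) = P.eval t := by
    intro x
    have hm : ∀ m : ℕ, 0 < m → ∃ P : ℝ[X], ∀ k : ℕ, ℓ (U (k / m) x) = P.eval ((k : ℝ) / m) := by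
      intro m hm
      obtain ⟨d, hd⟩ := hn (1 / m)
      obtain ⟨Q, hQ⟩ := poly_nat _ d hd ℓ x
      refine ⟨Q.comp (C (m : ℝ) * X), fun k => ?_⟩
      have := hQ k
      rw [← hpow] at this
      rw [show (k : ℝ) / m = k * (1 / m) by ring, this]
      have hm' : (m : ℝ) ≠ 0 := by positivity
      simp only [eval_comp, eval_mul, eval_C, eval_X]
      congr 1
      field_simp
    obtain ⟨P, hP⟩ := hm 1 one_pos
    refine ⟨P, ?_⟩
    have hrat : ∀ k m : ℕ, 0 < m → ℓ (U (k / m) x) = P.eval ((k : ℝ) / m) := by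
      intro k m h
      obtain ⟨Q, hQ⟩ := hm m h
      have : Q = P := by
        apply Polynomial.eq_of_infinite_eval_eq
        refine (Set.infinite_range_of_injective (Nat.cast_injective (R := ℝ))).mono ?_
        rintro _ ⟨j, rfl⟩
        have h1 := hQ (j * m)
        have h2 := hP j
        have hm' : (m : ℝ) ≠ 0 := by positivity
        push_cast at h1 h2
        rw [mul_div_cancel_right₀ _ hm'] at h1
        rw [div_one] at h2
        show eval _ _ = eval _ _
        rw [← h1, h2]
      rw [hQ, this]
    intro t ht
    -- approximate t by floor(t * m)/m
    have h1 : Tendsto (fun m : ℕ => ((⌊t * m⌋₊ : ℝ) / m)) atTop (𝓝 t) :=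
      (tendsto_nat_floor_mul_div_atTop ht).comp tendsto_natCast_atTop_atTop
    have hc1 : Continuous fun t => ℓ (U t x) := by fun_prop
    have h2 := (hc1.tendsto t).comp h1
    have h3 := (P.continuous.tendsto t).comp h1
    refine tendsto_nhds_unique (h2.congr' ?_) h3
    filter_upwards [eventually_gt_atTop 0] with m hm
    exact hrat _ m hm
  obtain ⟨P, hP⟩ := hpos x
  refine ⟨P, fun t => ?_⟩
  rcases le_total 0 t with ht | ht
  · exact hP t ht
  obtain ⟨Q, hQ⟩ := hpos (U t x)
  have : Q.comp (X - C t) = P := by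
    apply Polynomial.eq_of_infinite_eval_eq
    refine (Set.Ici_infinite (0:ℝ)).mono ?_
    intro s hs
    show eval _ _ = eval _ _
    have hs : 0 ≤ s := hs
    rw [← hP s hs, eval_comp]
    simp only [eval_sub, eval_X, eval_C]
    rw [← hQ (s - t) (by linarith)]
    rw [← mul_apply_eq_comp, ← hadd, sub_add_cancel]
  rw [← this, eval_comp]
  simp only [eval_sub, eval_X, eval_C]
  rw [← hQ (t - t) (by linarith), sub_self, h0]
  rfl

open spectrum in
lemma spec_aux {Aalg : Type*} [NormedRing Aalg] [NormedAlgebra ℂ Aalg] [CompleteSpace Aalg] [Nontrivial Aalg] (M : Aalg) :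
    ∃ μ ∈ spectrum ℂ M, ∀ δ > 0, ∃ C, ∀ k : ℕ, ‖M ^ k‖ ≤ C * (‖μ‖ + δ) ^ k := by
  obtain ⟨μ, hμ, hr⟩ := spectrum.exists_nnnorm_eq_spectralRadius (A := Aalg) M
  refine ⟨μ, hμ, fun δ hδ => ?_⟩
  have hlim := spectrum.pow_norm_pow_one_div_tendsto_nhds_spectralRadius M
  have hlt : spectralRadius ℂ M < ENNReal.ofReal (‖μ‖ + δ) := by
    rw [← hr, ENNReal.lt_ofReal_iff_toReal_lt (by simp)]
    simpa using hδ
  have hev := hlim.eventually_lt_const hlt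
  have hpos : 0 < ‖μ‖ + δ := by positivity
  have hev2 : ∀ᶠ k : ℕ in atTop, ‖M ^ k‖ ≤ (‖μ‖ + δ) ^ k := by
    filter_upwards [hev, eventually_gt_atTop 0] with k hk hk0
    rw [ENNReal.ofReal_lt_ofReal_iff hpos] at hk
    have h1 : (‖M ^ k‖ ^ (1 / (k:ℝ))) ^ k ≤ (‖μ‖ + δ) ^ k := pow_le_pow_left₀ (by positivity) hk.le k
    rwa [← Real.rpow_natCast, ← Real.rpow_mul (norm_nonneg _), one_div_mul_cancel (by positivity), Real.rpow_one] at h1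
  obtain ⟨K, hK⟩ := eventually_atTop.1 hev2
  refine ⟨1 + ∑ j ∈ Finset.range K, ‖M ^ j‖ / (‖μ‖ + δ) ^ j, fun k => ?_⟩
  have hs : 0 ≤ ∑ j ∈ Finset.range K, ‖M ^ j‖ / (‖μ‖ + δ) ^ j := Finset.sum_nonneg fun _ _ => by positivity
  rcases le_or_gt K k with h | h
  · refine (hK k h).trans ?_
    apply le_mul_of_one_le_left (by positivity); linarith
  · have := Finset.single_le_sum (f := fun j => ‖M ^ j‖ / (‖μ‖ + δ) ^ j) (s := Finset.range K) (fun _ _ => by positivity) (Finset.mem_range.2 h)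
    rw [← div_le_iff₀ (by positivity)]
    linarith

lemma lin_bound {F E' : Type*} [NormedAddCommGroup F] [NormedSpace ℝ F] [FiniteDimensional ℝ F]
    [NormedAddCommGroup E'] [NormedSpace ℝ E'] (Ψ : F →ₗ[ℝ] E') : ∃ C, 0 ≤ C ∧ ∀ x, ‖Ψ x‖ ≤ C * ‖x‖ :=
  ⟨_, norm_nonneg _, (LinearMap.toContinuousLinearMap Ψ).le_opNorm⟩

attribute [local instance] Matrix.linftyOpNormedAddCommGroup Matrix.linftyOpNormedSpace Matrix.linftyOpNormedRing Matrix.linftyOpNormedAlgebra in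
lemma spec {E : Type*} [NormedAddCommGroup E] [NormedSpace ℝ E] [FiniteDimensional ℝ E] [Nontrivial E]
    (T : E →L[ℝ] E) :
    ∃ r : ℝ, 0 ≤ r ∧ (∃ ℓ : E →L[ℝ] ℝ, ℓ ≠ 0 ∧ ∃ C, ∀ (k : ℕ) x, |ℓ x| * r ^ k ≤ C * ‖(T ^ k) x‖) ∧
      ∀ δ > 0, ∃ C, ∀ k : ℕ, ‖T ^ k‖ ≤ C * (r + δ) ^ k := by
  classical
  let d := Module.finrank ℝ E
  have hd : 0 < d := Module.finrank_pos
  have : Nonempty (Fin d) := ⟨⟨0, hd⟩⟩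
  let b : Module.Basis (Fin d) ℝ E := Module.finBasis ℝ E
  let M : Matrix (Fin d) (Fin d) ℝ := LinearMap.toMatrix b b (T : E →ₗ[ℝ] E)
  let Mc : Matrix (Fin d) (Fin d) ℂ := M.map Complex.ofRealHom
  have hpow : ∀ k : ℕ, Mc ^ k = (LinearMap.toMatrix b b ((T ^ k : E →L[ℝ] E) : E →ₗ[ℝ] E)).map Complex.ofRealHom := by
    intro k
    rw [ContinuousLinearMap.toLinearMap_pow, ← LinearMap.toMatrix_pow]
    exact (Matrix.map_pow M Complex.ofRealHom k).symm
  obtain ⟨μ, hμ, hgrow⟩ := spec_aux Mc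
  refine ⟨‖μ‖, norm_nonneg _, ?_, ?_⟩
  · have hdet : (algebraMap ℂ _ μ - Mc).det = 0 := by
      rw [spectrum.mem_iff, Matrix.isUnit_iff_isUnit_det, isUnit_iff_ne_zero, not_not] at hμ
      exact hμ
    obtain ⟨x, hx0, hx⟩ := Matrix.exists_vecMul_eq_zero_iff.2 hdet
    have hx1 : x ᵥ* Mc = μ • x := by
      rw [Matrix.vecMul_sub, Algebra.algebraMap_eq_smul_one, Matrix.vecMul_smul, Matrix.vecMul_one, sub_eq_zero] at hx
      exact hx.symm
    have hxk : ∀ k : ℕ, x ᵥ* (Mc ^ k) = μ ^ k • x := by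
      intro k
      induction k with
      | zero => simp
      | succ k ih => rw [pow_succ, ← Matrix.vecMul_vecMul, ih, Matrix.smul_vecMul, hx1, smul_smul, pow_succ]
    let L : E →ₗ[ℝ] ℂ :=
      { toFun := fun e => x ⬝ᵥ (fun i => ((b.repr e i : ℝ) : ℂ))
        map_add' := by
          intro e f
          simp only [dotProduct, map_add, Finsupp.add_apply, Complex.ofReal_add, mul_add, Finset.sum_add_distrib]
        map_smul' := by
          intro c e
          simp only [dotProduct, map_smul, Finsupp.smul_apply, smul_eq_mul, Complex.ofReal_mul, RingHom.id_apply, Complex.real_smul, Finset.mul_sum]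
          exact Finset.sum_congr rfl fun i _ => by ring }
    let Lc : E →L[ℝ] ℂ := LinearMap.toContinuousLinearMap L
    have hLk : ∀ (k : ℕ) e, Lc ((T ^ k) e) = μ ^ k * Lc e := by
      intro k e
      show x ⬝ᵥ (fun i => ((b.repr ((T ^ k) e) i : ℝ) : ℂ)) = μ ^ k * (x ⬝ᵥ (fun i => ((b.repr e i : ℝ) : ℂ)))
      have : (fun i => ((b.repr ((T ^ k) e) i : ℝ) : ℂ)) = (Mc ^ k) *ᵥ (fun i => ((b.repr e i : ℝ) : ℂ)) := by
        ext i
        have h1 := congrFun (LinearMap.toMatrix_mulVec_repr b b ((T ^ k : E →L[ℝ] E) : E →ₗ[ℝ] E) e) i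
        simp only [ContinuousLinearMap.coe_coe] at h1
        rw [← h1, hpow]
        simp [Matrix.mulVec, dotProduct]
      rw [this, Matrix.dotProduct_mulVec, hxk, smul_dotProduct, smul_eq_mul]
    have hmain : ∀ ℓ : E →L[ℝ] ℝ, (∀ e, |ℓ e| ≤ ‖Lc e‖) → ∃ C, ∀ (k : ℕ) e, |ℓ e| * ‖μ‖ ^ k ≤ C * ‖(T ^ k) e‖ := by
      intro ℓ hℓ
      refine ⟨‖Lc‖, fun k e => ?_⟩
      calc |ℓ e| * ‖μ‖ ^ k ≤ ‖Lc e‖ * ‖μ‖ ^ k := by gcongr; exact hℓ e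
        _ = ‖Lc ((T ^ k) e)‖ := by rw [hLk, norm_mul, norm_pow, mul_comm]
        _ ≤ _ := Lc.le_opNorm _
    by_cases hre : Complex.reCLM.comp Lc = 0
    · refine ⟨Complex.imCLM.comp Lc, ?_, hmain _ fun e => Complex.abs_im_le_norm _⟩
      intro him
      apply hx0
      ext i
      have h1 : Lc (b i) = x i := by
        show x ⬝ᵥ (fun j => ((b.repr (b i) j : ℝ) : ℂ)) = x i
        simp [dotProduct, Finsupp.single_apply, apply_ite (Complex.ofReal)]
      rw [← h1]
      apply Complex.ext
      · exact congrArg (fun f : E →L[ℝ] ℝ => f (b i)) hre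
      · exact congrArg (fun f : E →L[ℝ] ℝ => f (b i)) him
    · exact ⟨Complex.reCLM.comp Lc, hre, hmain _ fun e => Complex.abs_re_le_norm _⟩
  · let Ψ : Matrix (Fin d) (Fin d) ℂ →ₗ[ℝ] (E →L[ℝ] E) :=
      (LinearMap.toContinuousLinearMap : (E →ₗ[ℝ] E) ≃ₗ[ℝ] (E →L[ℝ] E)).toLinearMap ∘ₗ
        (LinearMap.toMatrix b b).symm.toLinearMap ∘ₗ (Complex.reLm.mapMatrix)
    have : FiniteDimensional ℝ (Matrix (Fin d) (Fin d) ℂ) := inferInstanceAs (FiniteDimensional ℝ (Fin d → Fin d → ℂ))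
    obtain ⟨C₀, hC₀, hb⟩ := lin_bound Ψ
    have hΨ : ∀ k : ℕ, Ψ (Mc ^ k) = T ^ k := by
      intro k
      have : Complex.reLm.mapMatrix (Mc ^ k) = LinearMap.toMatrix b b ((T ^ k : E →L[ℝ] E) : E →ₗ[ℝ] E) := by
        rw [hpow]; ext i j; simp
      show LinearMap.toContinuousLinearMap ((LinearMap.toMatrix b b).symm (Complex.reLm.mapMatrix (Mc ^ k))) = _
      rw [this, LinearEquiv.symm_apply_apply]
      rfl
    intro δ hδ
    obtain ⟨C, hC⟩ := hgrow δ hδ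
    refine ⟨C₀ * C, fun k => ?_⟩
    rw [← hΨ, mul_assoc]
    exact (hb _).trans (by gcongr; exact hC k)

lemma core {H : Type*} [Group H] {E : Type*} [NormedAddCommGroup E] [NormedSpace ℝ E]
    [FiniteDimensional ℝ E]
    (σ : H →* (E →L[ℝ] E)) (a n : ℝ → H) (w : H)
    (ha : ∀ s t, a (s + t) = a s * a t) (hn : ∀ s t, n (s + t) = n s * n t)
    (han : ∀ s t, a s * n t = n (Real.exp s * t) * a s)
    (hw : w * w = 1) (hwa : ∀ s, w * a s * w = a (-s))
    (hc : Continuous fun t => σ (n t)) (v : E)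
    (τ₁ τ₂ τ₃ : ℝ) (h12 : τ₁ ≠ τ₂) (h13 : τ₁ ≠ τ₃) (h23 : τ₂ ≠ τ₃)
    (hb1 : ∃ C, ∀ k : ℕ, ‖σ (a k) (σ (n τ₁) v)‖ ≤ C)
    (hb2 : ∃ C, ∀ k : ℕ, ‖σ (a k) (σ (n τ₂) v)‖ ≤ C)
    (hb3 : ∃ C, ∀ k : ℕ, ‖σ (a k) (σ (n τ₃) v)‖ ≤ C)
    (hcell : ∀ ℓ : E →L[ℝ] ℝ, (∀ p s t, ℓ (σ (w * n p * w * a s * n t) v) = 0) → ℓ = 0) :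
    ∀ t x, σ (n t) x = x := by
  rcases subsingleton_or_nontrivial E with hE | hE
  · intro t x; exact Subsingleton.elim _ _
  have ha0 : a 0 = 1 := by have := ha 0 0; simpa using this
  have hn0 : n 0 = 1 := by have := hn 0 0; simpa using this
  obtain ⟨r, hr0, ⟨ℓ, hℓ0, C₀, hℓ⟩, hgrow⟩ := spec (σ (a 1))
  have hak : ∀ k : ℕ, σ (a 1) ^ k = σ (a k) := by
    intro k
    induction k with
    | zero => simp [ha0]
    | succ k ih => rw [pow_succ, ih, ← map_mul, ← ha]; push_cast; rfl
  simp only [hak] at hℓ hgrow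
  have hpoly : ∀ (ℓ' : E →L[ℝ] ℝ) (x : E), ∃ P : Polynomial ℝ, ∀ t, ℓ' (σ (n t) x) = P.eval t := by
    intro ℓ' x
    refine poly_orbit (fun t => σ (n t)) (by simp [hn0]) (fun s t => by simp [hn]) hc ?_ ℓ' x
    intro t
    refine nilp (fun t => σ (n t)) (by simp [hn0]) hc (σ (a 1)) (σ (a (-1))) ?_ (Real.exp 1)
      (Real.one_lt_exp_iff.2 one_pos) ?_ t
    · rw [← map_mul, ← ha]; simp [ha0]
    · intro t
      rw [← map_mul, ← map_mul, han]
  have hng : ∀ δ > 0, ∃ C, ∀ k : ℕ, ‖σ (n (Real.exp k))‖ ≤ C * ((r + δ) ^ 2) ^ k := by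
    intro δ hδ
    obtain ⟨C, hC⟩ := hgrow δ hδ
    have hC0 : 0 ≤ C := by have := hC 0; simp at this; exact (norm_nonneg _).trans this
    refine ⟨C * ‖σ (n 1 * w)‖ * C * ‖σ w‖, fun k => ?_⟩
    have e : n (Real.exp k) = a k * (n 1 * w) * a k * w := by
      have h1 := han k 1
      rw [mul_one] at h1
      have h2 : w * a k * w = (a k)⁻¹ := by
        rw [hwa]; apply eq_inv_of_mul_eq_one_left; rw [← ha]; simp [ha0]
      calc n (Real.exp k) = (a k * n 1) * (a k)⁻¹ := by rw [h1]; group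
        _ = (a k * n 1) * (w * a k * w) := by rw [h2]
        _ = _ := by group
    rw [e, map_mul, map_mul, map_mul]
    calc ‖σ (a k) * σ (n 1 * w) * σ (a k) * σ w‖
        ≤ ‖σ (a k)‖ * ‖σ (n 1 * w)‖ * ‖σ (a k)‖ * ‖σ w‖ := by
          refine (norm_mul_le _ _).trans ?_
          gcongr
          refine (norm_mul_le _ _).trans ?_
          gcongr
          exact norm_mul_le _ _
      _ ≤ (C * (r + δ) ^ k) * ‖σ (n 1 * w)‖ * (C * (r + δ) ^ k) * ‖σ w‖ := by
          gcongr
          · exact hC k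
          · exact hC k
      _ = _ := by rw [← pow_mul, mul_comm 2 k, pow_mul]; ring
  have hpg : ∀ (ℓ' : E →L[ℝ] ℝ) (x : E) (P : Polynomial ℝ), (∀ t, ℓ' (σ (n t) x) = P.eval t) →
      ∀ δ > 0, ∃ C, ∀ k : ℕ, |P.eval (Real.exp k)| ≤ C * ((r + δ) ^ 2) ^ k := by
    intro ℓ' x P hP δ hδ
    obtain ⟨C, hC⟩ := hng δ hδ
    refine ⟨‖ℓ'‖ * C * ‖x‖, fun k => ?_⟩
    rw [← hP, ← Real.norm_eq_abs]
    calc _ ≤ ‖ℓ'‖ * (‖σ (n (Real.exp k))‖ * ‖x‖) :=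
          (ℓ'.le_opNorm _).trans (by gcongr; exact ContinuousLinearMap.le_opNorm _ _)
      _ ≤ ‖ℓ'‖ * ((C * ((r + δ) ^ 2) ^ k) * ‖x‖) := by gcongr; exact hC k
      _ = _ := by ring
  rcases le_or_gt r 1 with hr | hr
  · intro t x
    refine (SeparatingDual.eq_iff_forall_dual_eq (R := ℝ)).2 fun ℓ' => ?_
    obtain ⟨P, hP⟩ := hpoly ℓ' x
    have hdeg : P.natDegree = 0 := by
      by_cases hP0 : P = 0
      · simp [hP0]
      have h1 := poly_deg_le P hP0 r hr0 (hpg ℓ' x P hP)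
      by_contra hd
      have h2 : 1 < Real.exp 1 ^ P.natDegree := one_lt_pow₀ (Real.one_lt_exp_iff.2 one_pos) hd
      nlinarith
    have h0 := hP 0
    rw [hP, Polynomial.eq_C_of_natDegree_eq_zero hdeg]
    rw [Polynomial.eq_C_of_natDegree_eq_zero hdeg, hn0] at h0
    simpa using h0.symm
  · exfalso
    apply hℓ0
    apply hcell
    intro p s t
    let g := w * n p * w * a s
    let ℓ' : E →L[ℝ] ℝ := ℓ.comp (σ g)
    have hC₀ : 0 ≤ C₀ := by
      obtain ⟨x, hx⟩ := exists_ne (0 : E)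
      have h1 := hℓ 0 x
      by_contra! hneg
      have h2 : 0 < ‖σ (a (0:ℕ)) x‖ := by simpa [ha0] using hx
      have h3 : 0 ≤ |ℓ x| * r ^ 0 := by positivity
      nlinarith
    have hℓ' : ∃ C, 0 ≤ C ∧ ∀ (k : ℕ) x, |ℓ' x| * r ^ k ≤ C * ‖σ (a k) x‖ := by
      obtain ⟨K, hK⟩ := (isCompact_Icc (a := -|p|) (b := |p|)).exists_bound_of_continuousOn hc.continuousOn
      have hK0 : 0 ≤ K := (norm_nonneg _).trans (hK 0 (by simp))
      refine ⟨C₀ * (‖σ w‖ * K * ‖σ (w * a s)‖), by positivity, fun k x => ?_⟩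
      have e : a k * g = (w * n (Real.exp (-(k:ℝ)) * p) * (w * a s)) * a k := by
        have h1 : a k * w = w * a (-k) := by
          rw [← hwa, mul_assoc w (a k) w, ← mul_assoc w w, hw, one_mul]
        have h2 : a (-(k:ℝ)) * w = w * a k := by
          rw [← hwa, mul_assoc, hw, mul_one]
        show a k * (w * n p * w * a s) = _
        calc a k * (w * n p * w * a s) = (a k * w) * n p * w * a s := by group
          _ = w * (a (-k) * n p) * w * a s := by rw [h1]; group
          _ = w * n (Real.exp (-(k:ℝ)) * p) * (a (-k) * w) * a s := by rw [han]; group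
          _ = w * n (Real.exp (-(k:ℝ)) * p) * w * (a k * a s) := by rw [h2]; group
          _ = w * n (Real.exp (-(k:ℝ)) * p) * w * (a s * a k) := by rw [← ha, ← ha, add_comm]
          _ = _ := by group
      have e2 : σ (a k) (σ g x) = (σ w * σ (n (Real.exp (-(k:ℝ)) * p)) * σ (w * a s)) (σ (a k) x) := by
        have := congrArg (fun h => σ h x) e
        simpa [map_mul] using this
      refine (hℓ k (σ g x)).trans ?_
      rw [e2, mul_assoc C₀]
      gcongr
      refine (ContinuousLinearMap.le_opNorm _ _).trans ?_
      gcongr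
      refine (norm_mul_le _ _).trans ?_
      gcongr
      refine (norm_mul_le _ _).trans ?_
      gcongr
      apply hK
      rw [Set.mem_Icc, ← abs_le, abs_mul, Real.abs_exp]
      exact mul_le_of_le_one_left (abs_nonneg _) (Real.exp_le_one_iff.2 (by simp))
    obtain ⟨C₁, hC₁, hℓ'⟩ := hℓ'
    obtain ⟨P, hP⟩ := hpoly ℓ' v
    have hpt : ∀ τ : ℝ, (∃ C, ∀ k : ℕ, ‖σ (a k) (σ (n τ) v)‖ ≤ C) →
        ∃ C, ∀ k : ℕ, |P.eval (τ + Real.exp (-(k:ℝ)))| * r ^ k ≤ C := by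
      rintro τ ⟨C, hC⟩
      refine ⟨C₁ * (‖σ (n 1)‖ * C), fun k => ?_⟩
      rw [← hP]
      refine (hℓ' k _).trans ?_
      have e : a k * n (τ + Real.exp (-(k:ℝ))) = n 1 * (a k * n τ) := by
        rw [add_comm, hn, ← mul_assoc, han, ← Real.exp_add, add_neg_cancel, Real.exp_zero, mul_assoc]
      have e2 : σ (a k) (σ (n (τ + Real.exp (-(k:ℝ)))) v) = σ (n 1) (σ (a k) (σ (n τ) v)) := by
        have := congrArg (fun h => σ h v) e
        simpa [map_mul] using this
      rw [e2]
      gcongr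
      refine (ContinuousLinearMap.le_opNorm _ _).trans ?_
      gcongr
      exact hC k
    have hP0 := poly_three P r hr τ₁ τ₂ τ₃ h12 h13 h23 (hpt _ hb1) (hpt _ hb2) (hpt _ hb3) (hpg ℓ' v P hP)
    have := hP t
    rw [hP0, Polynomial.eval_zero] at this
    rw [map_mul]
    exact this

lemma germ {G : Type*} [Group G] [TopologicalSpace G] [IsTopologicalGroup G] {V : Type*}
    [NormedAddCommGroup V] [NormedSpace ℝ V] [FiniteDimensional ℝ V]
    (ρ : G →* (V →L[ℝ] V)) (v : V) :
    ∃ W : Submodule ℝ V, v ∈ W ∧ {g | ∀ x ∈ W, ρ g x ∈ W} ∈ 𝓝 (1 : G) ∧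
      ∀ O ∈ 𝓝 (1 : G), W ≤ Submodule.span ℝ ((fun g => ρ g v) '' O) := by
  let Sp : Set G → Submodule ℝ V := fun O => Submodule.span ℝ ((fun g => ρ g v) '' O)
  have hmono : ∀ O O', O ⊆ O' → Sp O ≤ Sp O' := fun O O' h => Submodule.span_mono (Set.image_mono h)
  obtain ⟨O₀, hO₀, hmin⟩ : ∃ O₀ ∈ 𝓝 (1 : G), ∀ O ∈ 𝓝 (1 : G),
      Module.finrank ℝ (Sp O₀) ≤ Module.finrank ℝ (Sp O) := by
    let Q : Set ℕ := {d | ∃ O ∈ 𝓝 (1 : G), Module.finrank ℝ (Sp O) = d}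
    have hQ : Q.Nonempty := ⟨_, Set.univ, univ_mem, rfl⟩
    obtain ⟨O, hO, h⟩ := Nat.sInf_mem hQ
    exact ⟨O, hO, fun O' hO' => h ▸ Nat.sInf_le ⟨O', hO', rfl⟩⟩
  have hle : ∀ O ∈ 𝓝 (1 : G), Sp O₀ ≤ Sp O := by
    intro O hO
    have h1 : Sp (O ∩ O₀) = Sp O₀ :=
      Submodule.eq_of_le_of_finrank_le (hmono _ _ Set.inter_subset_right) (hmin _ (inter_mem hO hO₀))
    rw [← h1]
    exact hmono _ _ Set.inter_subset_left
  refine ⟨Sp O₀, ?_, ?_, hle⟩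
  · exact Submodule.subset_span ⟨1, mem_of_mem_nhds hO₀, by simp⟩
  · have hmul : Tendsto (fun p : G × G => p.1 * p.2) (𝓝 1 ×ˢ 𝓝 1) (𝓝 (1 : G)) := by
      rw [← nhds_prod_eq]
      have := (continuous_mul (M := G)).tendsto (1, 1)
      simpa using this
    obtain ⟨O₁, hO₁, O₂, hO₂, h⟩ := mem_prod_iff.1 (hmul hO₀)
    filter_upwards [hO₁] with g hg x hx
    have hx2 := hle O₂ hO₂ hx
    have h3 : Sp O₂ ≤ (Sp O₀).comap (ρ g : V →ₗ[ℝ] V) := by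
      refine Submodule.span_le.2 ?_
      rintro _ ⟨g', hg', rfl⟩
      refine Submodule.subset_span ⟨g * g', h (Set.mk_mem_prod hg hg'), ?_⟩
      simp [map_mul]
    exact h3 hx2

/-- the stabilizer of a subspace -/
def stabW {G : Type*} [Group G] {V : Type*} [NormedAddCommGroup V] [NormedSpace ℝ V]
    (ρ : G →* (V →L[ℝ] V)) (W : Submodule ℝ V) : Subgroup G where
  carrier := {g | (∀ x ∈ W, ρ g x ∈ W) ∧ ∀ x ∈ W, ρ g⁻¹ x ∈ W}
  one_mem' := by simp
  mul_mem' := by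
    rintro g h ⟨hg, hg'⟩ ⟨hh, hh'⟩
    constructor
    · intro x hx
      rw [map_mul]
      exact hg _ (hh _ hx)
    · intro x hx
      rw [_root_.mul_inv_rev, map_mul]
      exact hh' _ (hg' _ hx)
  inv_mem' := by
    rintro g ⟨hg, hg'⟩
    exact ⟨hg', by simpa using hg⟩

/-- the restricted representation -/
def resRep {G : Type*} [Group G] {V : Type*} [NormedAddCommGroup V] [NormedSpace ℝ V]
    (ρ : G →* (V →L[ℝ] V)) (W : Submodule ℝ V) : stabW ρ W →* (W →L[ℝ] W) where
  toFun g := ((ρ g).comp W.subtypeL).codRestrict W fun x => g.2.1 x x.2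
  map_one' := by ext x; simp
  map_mul' g h := by
    ext x
    show ρ ((g : G) * h) x = ρ g (ρ h x)
    rw [map_mul]
    rfl

lemma resRep_apply {G : Type*} [Group G] {V : Type*} [NormedAddCommGroup V] [NormedSpace ℝ V]
    (ρ : G →* (V →L[ℝ] V)) (W : Submodule ℝ V) (g : stabW ρ W) (x : W) :
    ((resRep ρ W g x : W) : V) = ρ g x := rfl

lemma stab_nhds {G : Type*} [Group G] [TopologicalSpace G] [IsTopologicalGroup G] (S : Subgroup G)
    (h : (S : Set G) ∈ 𝓝 (1 : G)) : connectedComponent (1 : G) ⊆ S := by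
  have ho : IsOpen (S : Set G) := S.isOpen_of_mem_nhds h
  exact IsClopen.connectedComponent_subset ⟨S.isClosed_of_isOpen ho, ho⟩ S.one_mem

lemma main_abs {G : Type*} [Group G] [TopologicalSpace G] [IsTopologicalGroup G] {V : Type*}
    [NormedAddCommGroup V] [NormedSpace ℝ V] [FiniteDimensional ℝ V]
    (ρ : G →* (V →L[ℝ] V)) (hρ : Continuous fun g => ρ g) (a n : ℝ → G) (w : G)
    (ha : ∀ s t, a (s + t) = a s * a t) (hn : ∀ s t, n (s + t) = n s * n t)
    (han : ∀ s t, a s * n t = n (Real.exp s * t) * a s)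
    (hw : w * w = 1) (hwa : ∀ s, w * a s * w = a (-s))
    (hac : Continuous a) (hnc : Continuous n)
    (c : ℝ) (hwn : w = n c * (w * n c * w) * n c)
    (hcell : {g | ∃ p s t, g = w * n p * w * a s * n t} ∈ 𝓝 (1 : G)) (v : V)
    (τ₁ τ₂ τ₃ : ℝ) (h12 : τ₁ ≠ τ₂) (h13 : τ₁ ≠ τ₃) (h23 : τ₂ ≠ τ₃)
    (hb1 : ∃ C, ∀ k : ℕ, ‖ρ (a k) (ρ (n τ₁) v)‖ ≤ C)
    (hb2 : ∃ C, ∀ k : ℕ, ‖ρ (a k) (ρ (n τ₂) v)‖ ≤ C)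
    (hb3 : ∃ C, ∀ k : ℕ, ‖ρ (a k) (ρ (n τ₃) v)‖ ≤ C) :
    ∀ h ∈ connectedComponent (1 : G), ρ h v = v := by
  have ha0 : a 0 = 1 := by have := ha 0 0; simpa using this
  have hn0 : n 0 = 1 := by have := hn 0 0; simpa using this
  obtain ⟨W, hvW, hWn, hWs⟩ := germ ρ v
  have hS := stab_nhds (stabW ρ W) (by
    have h2 : Tendsto (fun g : G => g⁻¹) (𝓝 1) (𝓝 1) := by
      have := (continuous_inv (G := G)).tendsto 1
      simpa using this
    filter_upwards [hWn, h2 hWn] with g hg hg'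
    exact ⟨hg, hg'⟩)
  have hpath : ∀ f : ℝ → G, Continuous f → f 0 = 1 → ∀ t, f t ∈ stabW ρ W := by
    intro f hf hf0 t
    apply hS
    refine (isPreconnected_range hf).subset_connectedComponent ?_ ⟨t, rfl⟩
    exact ⟨0, hf0⟩
  have haS := hpath a hac ha0
  have hnS := hpath n hnc hn0
  have hmS := hpath (fun t => w * n t * w) (by fun_prop) (by simp [hn0, hw])
  have hwS : w ∈ stabW ρ W := by
    rw [hwn]
    exact mul_mem (mul_mem (hnS _) (hmS _)) (hnS _)
  have htriv := core (resRep ρ W) (fun s => ⟨a s, haS s⟩) (fun s => ⟨n s, hnS s⟩) ⟨w, hwS⟩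
    (fun s t => Subtype.ext (ha s t)) (fun s t => Subtype.ext (hn s t))
    (fun s t => Subtype.ext (han s t)) (Subtype.ext hw) (fun s => Subtype.ext (hwa s))
    (by
      rw [continuous_clm_apply]
      intro x
      refine Continuous.subtype_mk (f := fun t => ρ (n t) (x : V)) ?_ _
      fun_prop) ⟨v, hvW⟩ τ₁ τ₂ τ₃ h12 h13 h23 hb1 hb2 hb3 (by
      intro ℓ hℓ
      have hle := hWs _ hcell
      have h1 : Submodule.span ℝ ((fun g => ρ g v) '' {g | ∃ p s t, g = w * n p * w * a s * n t}) ≤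
          (LinearMap.ker (ℓ : W →ₗ[ℝ] ℝ)).map W.subtype := by
        refine Submodule.span_le.2 ?_
        rintro _ ⟨_, ⟨p, s, t, rfl⟩, rfl⟩
        exact ⟨_, hℓ p s t, rfl⟩
      ext x
      obtain ⟨y, hy, hyx⟩ := h1 (hle x.2)
      have : y = x := Subtype.ext hyx
      rw [← this]
      exact hy)
  have hnW : ∀ t, ∀ x ∈ W, ρ (n t) x = x := by
    intro t x hx
    have := htriv t ⟨x, hx⟩
    exact congrArg Subtype.val this
  have hmW : ∀ t, ∀ x ∈ W, ρ (w * n t * w) x = x := by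
    intro t x hx
    rw [map_mul, map_mul]
    show ρ w (ρ (n t) (ρ w x)) = x
    rw [hnW t _ (hwS.1 x hx)]
    have := congrArg (fun g => ρ g x) hw
    simpa using this
  have hwW : ∀ x ∈ W, ρ w x = x := by
    intro x hx
    rw [hwn, map_mul, map_mul]
    show ρ (n c) (ρ (w * n c * w) (ρ (n c) x)) = x
    rw [hnW c x hx, hmW c x hx, hnW c x hx]
  have haW : ∀ s, ∀ x ∈ W, ρ (a s) x = x := by
    intro s x hx
    have h1 : a s = a (s / 2) * (w * a (-(s / 2)) * w) := by
      rw [hwa, neg_neg, ← ha]; congr 1; ring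
    rw [h1, map_mul, map_mul, map_mul]
    show ρ (a (s / 2)) (ρ w (ρ (a (-(s / 2))) (ρ w x))) = x
    rw [hwW x hx, hwW _ ((haS (-(s / 2))).1 x hx), ← mul_apply_eq_comp, ← map_mul, ← ha]
    simp [ha0]
  -- stabilizer of v
  let Sv : Subgroup G :=
    { carrier := {g | ρ g v = v}
      one_mem' := by simp
      mul_mem' := by
        intro g h hg hh
        show ρ (g * h) v = v
        rw [map_mul]
        show ρ g (ρ h v) = v
        rw [show ρ h v = v from hh, show ρ g v = v from hg]
      inv_mem' := by
        intro g hg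
        show ρ g⁻¹ v = v
        have h1 : ρ g v = v := hg
        conv_lhs => rw [← h1]
        rw [← mul_apply_eq_comp, ← map_mul]
        simp }
  refine stab_nhds Sv ?_
  filter_upwards [hcell]
  rintro _ ⟨p, s, t, rfl⟩
  show ρ (w * n p * w * a s * n t) v = v
  rw [map_mul, map_mul]
  show ρ (w * n p * w) (ρ (a s) (ρ (n t) v)) = v
  rw [hnW t v hvW, haW s v hvW, hmW p v hvW]

/-- the underlying matrix -/
def lmat (g : LorentzGrp 2) : Matrix (Fin 3) (Fin 3) ℝ := ((g : GL (Fin 3) ℝ) : Matrix (Fin 3) (Fin 3) ℝ)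

lemma lmat_mul (g h : LorentzGrp 2) : lmat (g * h) = lmat g * lmat h := rfl
lemma lmat_one : lmat 1 = 1 := rfl
lemma lmat_ext {g h : LorentzGrp 2} (H : lmat g = lmat h) : g = h := Subtype.ext (Units.ext H)

lemma lmat_of_act (g : LorentzGrp 2) (M : Matrix (Fin 3) (Fin 3) ℝ) (h : ∀ x, lorAct g x = M *ᵥ x) :
    lmat g = M := by
  apply Matrix.ext_of_mulVec_single
  intro i
  exact h _

lemma lorQ_two (x : Fin 3 → ℝ) : lorQ 2 x = 2 * x 0 * x 2 + x 1 ^ 2 := by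
  simp [lorQ, Fin.sum_univ_three, Fin.last]

/-- the Gram matrix -/
def lJ : Matrix (Fin 3) (Fin 3) ℝ := !![0,0,1;0,1,0;1,0,0]

/-- the Weyl element -/
def lw : LorentzGrp 2 :=
  ⟨⟨!![0,0,-1;0,-1,0;-1,0,0], !![0,0,-1;0,-1,0;-1,0,0],
    by ext i j; fin_cases i <;> fin_cases j <;> simp [Matrix.mul_apply, Fin.sum_univ_three],
    by ext i j; fin_cases i <;> fin_cases j <;> simp [Matrix.mul_apply, Fin.sum_univ_three]⟩, by
    intro x
    rw [lorQ_two, lorQ_two]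
    simp [Matrix.mulVec, dotProduct, Fin.sum_univ_three]
    ring⟩

lemma lmat_lw : lmat lw = !![0,0,-1;0,-1,0;-1,0,0] := rfl

lemma lmat_A (A : LorentzGrp 2) (s : ℝ)
    (hA : ∀ (x : Fin 3 → ℝ), lorAct A x = ![Real.exp s * x 0, x 1, Real.exp (-s) * x 2]) :
    lmat A = !![Real.exp s,0,0;0,1,0;0,0,Real.exp (-s)] := by
  apply lmat_of_act
  intro x
  rw [hA]
  ext i; fin_cases i <;> simp [Matrix.mulVec, dotProduct, Fin.sum_univ_three]

lemma lmat_N (N : LorentzGrp 2) (t : ℝ)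
    (hN : ∀ (x : Fin 3 → ℝ), lorAct N x = ![x 0 + t * x 1 - t ^ 2 / 2 * x 2, x 1 - t * x 2, x 2]) :
    lmat N = !![1,t,-(t^2/2);0,1,-t;0,0,1] := by
  apply lmat_of_act
  intro x
  rw [hN]
  ext i; fin_cases i <;> simp [Matrix.mulVec, dotProduct, Fin.sum_univ_three] <;> ring

lemma lcont (F : ℝ → LorentzGrp 2) (hadd : ∀ s t, F (s + t) = F s * F t)
    (hc : Continuous fun t => lmat (F t)) : Continuous F := by
  have h0 : F 0 = 1 := by have := hadd 0 0; simpa using this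
  refine Continuous.subtype_mk (f := fun t => (F t : GL (Fin 3) ℝ)) ?_ _
  rw [Units.continuous_iff]
  refine ⟨hc, ?_⟩
  have h : ∀ t, (F t)⁻¹ = F (-t) := fun t => by
    rw [inv_eq_iff_mul_eq_one, ← hadd]; simp [h0]
  have h2 : ∀ t, (((F t : GL (Fin 3) ℝ)⁻¹ : GL (Fin 3) ℝ) : Matrix (Fin 3) (Fin 3) ℝ) = lmat (F (-t)) := by
    intro t; rw [← h]; rfl
  simp only [h2]
  exact hc.comp continuous_neg

lemma lgram_col (g : LorentzGrp 2) : (lmat g)ᵀ * lJ * lmat g = lJ := by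
  have hq : ∀ x : Fin 3 → ℝ, lorQ 2 (lmat g *ᵥ x) = lorQ 2 x := g.2
  have hB : ∀ i j : Fin 3, lorQ 2 (lmat g *ᵥ (Pi.single i 1 + Pi.single j 1))
     = lorQ 2 (Pi.single i 1 + Pi.single j 1) := fun i j => hq _
  ext i j
  have h1 := hB i j
  have h2 := hB i i
  have h3 := hB j j
  simp only [lorQ_two, Matrix.mulVec, dotProduct, Fin.sum_univ_three, Pi.add_apply] at h1 h2 h3
  simp only [Matrix.mul_apply, Fin.sum_univ_three, Matrix.transpose_apply, lJ]
  fin_cases i <;> fin_cases j <;> simp [Pi.single_apply] at h1 h2 h3 ⊢ <;> linarith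

lemma lgram_row (g : LorentzGrp 2) : lmat g * lJ * (lmat g)ᵀ = lJ := by
  have hJ : lJ * lJ = 1 := by
    ext i j; fin_cases i <;> fin_cases j <;> simp [Matrix.mul_apply, Fin.sum_univ_three, lJ]
  have h1 : (lJ * (lmat g)ᵀ * lJ) * lmat g = 1 := by
    rw [mul_assoc lJ, mul_assoc lJ, lgram_col, hJ]
  have h2 := mul_eq_one_comm.1 h1
  calc lmat g * lJ * (lmat g)ᵀ = lmat g * (lJ * (lmat g)ᵀ * lJ) * lJ := by
        simp only [mul_assoc, hJ, mul_one]
    _ = lJ := by rw [h2, one_mul]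

lemma cell_mat (m : Matrix (Fin 3) (Fin 3) ℝ) (h : mᵀ * lJ * m = lJ) (h' : m * lJ * mᵀ = lJ)
    (h00 : 0 < m 0 0) (h11 : 0 < m 1 1 - m 0 1 * m 1 0 / m 0 0) :
    m = !![0,0,-1;0,-1,0;-1,0,0] * !![1,-(m 1 0/m 0 0),-((-(m 1 0/m 0 0))^2/2);0,1,-(-(m 1 0/m 0 0));0,0,1] *
      !![0,0,-1;0,-1,0;-1,0,0] *
      !![m 0 0,0,0;0,1,0;0,0,(m 0 0)⁻¹] * !![1,m 0 1/m 0 0,-((m 0 1/m 0 0)^2/2);0,1,-(m 0 1/m 0 0);0,0,1] := by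
  have e := fun i j => congrFun (congrFun h i) j
  have e' := fun i j => congrFun (congrFun h' i) j
  simp only [Matrix.mul_apply, Fin.sum_univ_three, Matrix.transpose_apply, lJ] at e e'
  have e00 := e 0 0
  have e01 := e 0 1
  have e11 := e 1 1
  have e02 := e 0 2
  have f00 := e' 0 0
  have f01 := e' 0 1
  simp at e00 e01 e11 e02 f00 f01
  have hne : m 0 0 ≠ 0 := h00.ne'
  obtain ⟨q, hq⟩ : ∃ q, q = m 1 0 / m 0 0 := ⟨_, rfl⟩
  obtain ⟨t, ht⟩ : ∃ t, t = m 0 1 / m 0 0 := ⟨_, rfl⟩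
  have hm10 : m 1 0 = q * m 0 0 := by rw [hq]; field_simp
  have hm01 : m 0 1 = t * m 0 0 := by rw [ht]; field_simp
  have h20 : m 2 0 = - (q^2/2) * m 0 0 := by
    rw [hm10] at e00
    apply mul_left_cancel₀ hne; linarith
  have h02 : m 0 2 = - (t^2/2) * m 0 0 := by
    rw [hm01] at f00
    apply mul_left_cancel₀ hne; linarith
  have h21 : m 2 1 = q^2/2 * t * m 0 0 - q * m 1 1 := by
    rw [hm10, hm01, h20] at e01
    apply mul_left_cancel₀ hne; linarith
  have hx : m 1 1 = 1 + q * t * m 0 0 := by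
    rw [hm01, h21] at e11
    rw [hm10, hm01] at h11
    have : t * m 0 0 * (q * m 0 0) / m 0 0 = q * t * m 0 0 := by field_simp
    rw [this] at h11
    have h5 : (m 1 1 - q * t * m 0 0 - 1) * (m 1 1 - q * t * m 0 0 + 1) = 0 := by linarith
    rcases mul_eq_zero.1 h5 with h6 | h6 <;> linarith
  have h12 : m 1 2 = q * (-(t^2/2)) * m 0 0 - t := by
    rw [hm10, hm01, h02, hx] at f01
    apply mul_left_cancel₀ hne; linarith
  have h22 : m 2 2 = (m 0 0)⁻¹ + q * t + q^2*t^2/4 * m 0 0 := by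
    rw [hm10, h20, h02, h12] at e02
    apply mul_left_cancel₀ hne
    have : m 0 0 * (m 0 0)⁻¹ = 1 := mul_inv_cancel₀ hne
    linarith
  rw [← hq, ← ht]
  have h21' := h21
  rw [hx] at h21'
  ext i j
  fin_cases i <;> fin_cases j <;>
    simp [Matrix.mul_apply, Fin.sum_univ_three, hm10, hm01, h20, h02, h21', hx, h12, h22] <;> ring

/-- Let `ρ` be a continuous representation of `O(1,2)` on a finite-dimensional
real normed vector space `V`. Let `a^s` and `n(t)` be the elements of `O(1,2)` acting by
`a^s(x₁,x₂,x₃) = (e^s x₁, x₂, e^{-s} x₃)` and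
`n(t)(x₁,x₂,x₃) = (x₁ + t x₂ − (t²/2) x₃, x₂ − t x₃, x₃)`, and let
`V⁻ = {v : {ρ(a^s) v : s ≥ 0} is bounded}`. If `t₁, t₂, t₃` are pairwise distinct reals,
then every `v ∈ ρ(n(t₁))(V⁻) ∩ ρ(n(t₂))(V⁻) ∩ ρ(n(t₃))(V⁻)` is fixed by the identity
component of `O(1,2)`. -/
theorem fixed_by_identity_component_of_mem_three_translates_of_stable_subspace
    (V : Type*) [NormedAddCommGroup V] [NormedSpace ℝ V] [FiniteDimensional ℝ V]
    (ρ : LorentzGrp 2 →* (V →L[ℝ] V)) (hρ : Continuous fun g => ρ g)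
    (A : ℝ → LorentzGrp 2)
    (hA : ∀ (s : ℝ) (x : Fin 3 → ℝ),
      lorAct (A s) x = ![Real.exp s * x 0, x 1, Real.exp (-s) * x 2])
    (N : ℝ → LorentzGrp 2)
    (hN : ∀ (t : ℝ) (x : Fin 3 → ℝ),
      lorAct (N t) x = ![x 0 + t * x 1 - t ^ 2 / 2 * x 2, x 1 - t * x 2, x 2])
    (Vm : Set V)
    (hVm : Vm = {w : V | IsBounded {y : V | ∃ s : ℝ, 0 ≤ s ∧ y = ρ (A s) w}})
    (t₁ t₂ t₃ : ℝ) (h12 : t₁ ≠ t₂) (h13 : t₁ ≠ t₃) (h23 : t₂ ≠ t₃)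
    (v : V)
    (hv1 : ∃ w ∈ Vm, v = ρ (N t₁) w)
    (hv2 : ∃ w ∈ Vm, v = ρ (N t₂) w)
    (hv3 : ∃ w ∈ Vm, v = ρ (N t₃) w) :
    ∀ h ∈ connectedComponent (1 : LorentzGrp 2), ρ h v = v := by
  have mA : ∀ s, lmat (A s) = _ := fun s => lmat_A (A s) s (hA s)
  have mN : ∀ t, lmat (N t) = _ := fun t => lmat_N (N t) t (hN t)
  have ha : ∀ s t, A (s + t) = A s * A t := by
    intro s t
    apply lmat_ext
    rw [lmat_mul, mA, mA, mA]
    ext i j; fin_cases i <;> fin_cases j <;>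
      simp [Matrix.mul_apply, Fin.sum_univ_three, Real.exp_add, mul_comm]
  have hn : ∀ s t, N (s + t) = N s * N t := by
    intro s t
    apply lmat_ext
    rw [lmat_mul, mN, mN, mN]
    ext i j; fin_cases i <;> fin_cases j <;>
      simp [Matrix.mul_apply, Fin.sum_univ_three] <;> ring
  have han : ∀ s t, A s * N t = N (Real.exp s * t) * A s := by
    intro s t
    apply lmat_ext
    rw [lmat_mul, lmat_mul, mA, mN, mN]
    have : Real.exp s * Real.exp (-s) = 1 := by rw [← Real.exp_add]; simp
    ext i j; fin_cases i <;> fin_cases j <;>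
      simp [Matrix.mul_apply, Fin.sum_univ_three]
    · linear_combination (-Real.exp s * t ^ 2 / 2) * this
    · linear_combination (-t) * this
  have hw : lw * lw = 1 := by
    apply lmat_ext
    rw [lmat_mul, lmat_lw, lmat_one]
    ext i j; fin_cases i <;> fin_cases j <;> simp [Matrix.mul_apply, Fin.sum_univ_three]
  have hwa : ∀ s, lw * A s * lw = A (-s) := by
    intro s
    apply lmat_ext
    rw [lmat_mul, lmat_mul, mA, mA, lmat_lw]
    ext i j; fin_cases i <;> fin_cases j <;> simp [Matrix.mul_apply, Fin.sum_univ_three]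
  have hac : Continuous A := by
    refine lcont A ha ?_
    simp only [mA]
    refine continuous_matrix fun i j => ?_
    fin_cases i <;> fin_cases j <;> simp <;> fun_prop
  have hnc : Continuous N := by
    refine lcont N hn ?_
    simp only [mN]
    refine continuous_matrix fun i j => ?_
    fin_cases i <;> fin_cases j <;> simp <;> fun_prop
  have hwn : lw = N (Real.sqrt 2) * (lw * N (Real.sqrt 2) * lw) * N (Real.sqrt 2) := by
    apply lmat_ext
    simp only [lmat_mul, mN, lmat_lw]
    have h2 : Real.sqrt 2 * Real.sqrt 2 = 2 := Real.mul_self_sqrt (by norm_num)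
    ext i j; fin_cases i <;> fin_cases j <;>
      simp [Matrix.mul_apply, Fin.sum_univ_three] <;> linarith
  have hcell : {g | ∃ p s t, g = lw * N p * lw * A s * N t} ∈ 𝓝 (1 : LorentzGrp 2) := by
    have hcm : Continuous lmat := Units.continuous_val.comp continuous_subtype_val
    have hce : ∀ i j, Continuous fun g => lmat g i j := fun i j => hcm.matrix_elem i j
    have e1 : ∀ᶠ g in 𝓝 (1 : LorentzGrp 2), 0 < lmat g 0 0 :=
      (hce 0 0).continuousAt.eventually_const_lt (by simp [lmat_one])
    have e2 : ∀ᶠ g in 𝓝 (1 : LorentzGrp 2), 0 < lmat g 1 1 - lmat g 0 1 * lmat g 1 0 / lmat g 0 0 := by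
      have : ContinuousAt (fun g => lmat g 1 1 - lmat g 0 1 * lmat g 1 0 / lmat g 0 0) (1 : LorentzGrp 2) :=
        (hce 1 1).continuousAt.sub (((hce 0 1).continuousAt.mul (hce 1 0).continuousAt).div
          (hce 0 0).continuousAt (by simp [lmat_one]))
      exact this.eventually_const_lt (by simp [lmat_one])
    filter_upwards [e1, e2] with g h1 h2
    refine ⟨-(lmat g 1 0 / lmat g 0 0), Real.log (lmat g 0 0), lmat g 0 1 / lmat g 0 0, ?_⟩
    apply lmat_ext
    simp only [lmat_mul, mN, mA, lmat_lw]
    rw [Real.exp_neg, Real.exp_log h1]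
    exact cell_mat (lmat g) (lgram_col g) (lgram_row g) h1 h2
  have hb : ∀ t, (∃ w ∈ Vm, v = ρ (N t) w) → ∃ C, ∀ k : ℕ, ‖ρ (A k) (ρ (N (-t)) v)‖ ≤ C := by
    rintro t ⟨w, hw, rfl⟩
    rw [hVm] at hw
    obtain ⟨C, hC⟩ := (isBounded_iff_forall_norm_le).1 hw
    refine ⟨C, fun k => ?_⟩
    have h0 : N 0 = 1 := by have := hn 0 0; simpa using this
    have : ρ (N (-t)) (ρ (N t) w) = w := by
      rw [← mul_apply_eq_comp, ← map_mul, ← hn, neg_add_cancel, h0]; simp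
    rw [this]
    exact hC _ ⟨k, by positivity, rfl⟩
  exact main_abs ρ hρ A N lw ha hn han hw hwa hac hnc _ hwn hcell v (-t₁) (-t₂) (-t₃)
    (fun h => h12 (neg_injective h)) (fun h => h13 (neg_injective h)) (fun h => h23 (neg_injective h))
    (hb _ hv1) (hb _ hv2) (hb _ hv3)
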